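/- arXiv:1301.4861 — 3 statements merged into one kernel-verified Lean document; each statement's English description precedes it below -/
import Mathlib

section
/- Let X and Y be symmetric positive definite real n×n matrices. Let R be an invertible n×n matrix with Y = RRᵀ, let U be an orthogonal n×n matrix and Σ a diagonal n×n matrix with strictly positive diagonal entries such that RᵀXR = UΣ²Uᵀ. Define T = Σ^{1/2}UᵀR⁻¹, where Σ^{1/2} is the entrywise square root of the diagonal of Σ. Then T is invertible with T⁻¹ = RUΣ^{−1/2}, and both transformed matrices coincide with Σ: (T⁻¹)ᵀXT⁻¹ = Σ and TYTᵀ = Σ. -/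
open Matrix

/-!
With `M = Σ^(1/2) Uᵀ` the hypothesis reads `Rᵀ X R = (Mᵀ M)²`, while `M Mᵀ = Σ` and `T = M R⁻¹`.
Hence `T Y Tᵀ = M Mᵀ`, and `(T⁻¹)ᵀ X T⁻¹ = (Mᵀ)⁻¹ (Mᵀ M)² M⁻¹ = M Mᵀ`. Only products, inverses and
transposes occur, so the computation takes place in any monoid with involution.
-/

section StarMonoid

variable {A : Type*} [Monoid A] [StarMul A]

theorem mul_inv_conj_mul_star_self (M : A) (R : Aˣ) :
    (M * ↑R⁻¹) * (R * star (R : A)) * star (M * ↑R⁻¹) = M * star M := by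
  have hR : star (R : A) * star (↑R⁻¹ : A) = 1 := by rw [← star_mul, R.inv_mul, star_one]
  calc (M * ↑R⁻¹) * (R * star (R : A)) * star (M * ↑R⁻¹)
      = M * (↑R⁻¹ * R) * (star (R : A) * star (↑R⁻¹ : A)) * star M := by
        simp only [star_mul, mul_assoc]
    _ = M * star M := by rw [R.inv_mul, hR, mul_one, mul_one]

theorem star_conj_mul_inv_of_eq_sq {X R : A} {M : Aˣ}
    (hX : star R * X * R = (star (M : A) * M) ^ 2) :
    star (R * ↑M⁻¹) * X * (R * ↑M⁻¹) = M * star (M : A) := by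
  have hM : star (↑M⁻¹ : A) * star (M : A) = 1 := by rw [← star_mul, M.mul_inv, star_one]
  calc star (R * ↑M⁻¹) * X * (R * ↑M⁻¹)
      = star (↑M⁻¹ : A) * (star R * X * R) * ↑M⁻¹ := by simp only [star_mul, mul_assoc]
    _ = (star (↑M⁻¹ : A) * star (M : A)) * (M * star (M : A)) * (M * ↑M⁻¹) := by
        rw [hX, sq]; simp only [mul_assoc]
    _ = M * star (M : A) := by rw [hM, M.mul_inv, one_mul, mul_one]

theorem sector_balancing_transformation_general {X Y U : A} {R S : Aˣ}
    (hY : Y = R * star (R : A)) (hU : U ∈ unitary A)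
    (hX : star (R : A) * X * R = U * (star (S : A) * S) ^ 2 * star U) :
    (S * star U * ↑R⁻¹) * (R * U * ↑S⁻¹) = 1
    ∧ (R * U * ↑S⁻¹) * (S * star U * ↑R⁻¹) = 1
    ∧ star (R * U * ↑S⁻¹) * X * (R * U * ↑S⁻¹) = S * star (S : A)
    ∧ (S * star U * ↑R⁻¹) * Y * star (S * star U * ↑R⁻¹) = S * star (S : A) := by
  let V : Aˣ := Unitary.toUnits ⟨U, hU⟩
  let M : Aˣ := S * V⁻¹
  have hM : (M : A) = S * star U := rfl
  have hM_inv : R * U * ↑S⁻¹ = R * (↑M⁻¹ : A) := mul_assoc _ _ _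
  have hM_mul_star : (M : A) * star (M : A) = S * star (S : A) := by
    rw [hM, star_mul, star_star, mul_assoc, ← mul_assoc (star U),
      Unitary.star_mul_self_of_mem hU, one_mul]
  have hX_sq : star (R : A) * X * R = (star (M : A) * M) ^ 2 := calc
    star (R : A) * X * R = U * (star (S : A) * S) ^ 2 * star U := hX
    _ = (U * (star (S : A) * S) * star U) ^ 2 := (V.conj_pow _ 2).symm
    _ = (star (M : A) * M) ^ 2 := by simp only [hM, star_mul, star_star, mul_assoc]
  rw [hM_inv, ← hM, hY, ← hM_mul_star]
  refine ⟨?_, ?_, star_conj_mul_inv_of_eq_sq hX_sq, mul_inv_conj_mul_star_self _ R⟩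
  · simpa only [_root_.mul_inv_rev, inv_inv, Units.val_mul] using (M * R⁻¹).mul_inv
  · simpa only [_root_.mul_inv_rev, inv_inv, Units.val_mul] using (M * R⁻¹).inv_mul

end StarMonoid

section DiagonalSqrt

variable {m : Type*} [Fintype m] [DecidableEq m] {σ : m → ℝ}

/-- The square root `Σ^(1/2)` of a diagonal matrix `Σ = diagonal σ` with positive entries, as a
unit of the matrix ring, with inverse `Σ^(-1/2)`. -/
@[simps]
noncomputable def diagonalSqrt (hσ : ∀ i, 0 < σ i) : (Matrix m m ℝ)ˣ where
  val := diagonal fun i => √(σ i)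
  inv := diagonal fun i => (√(σ i))⁻¹
  val_inv := by simp [fun i => (Real.sqrt_pos.2 (hσ i)).ne']
  inv_val := by simp [fun i => (Real.sqrt_pos.2 (hσ i)).ne']

theorem star_diagonalSqrt_mul_self (hσ : ∀ i, 0 < σ i) :
    star (diagonalSqrt hσ).val * diagonalSqrt hσ = diagonal σ := by
  simp [diagonalSqrt, star_eq_conjTranspose, fun i => Real.mul_self_sqrt (hσ i).le]

theorem diagonalSqrt_mul_star_self (hσ : ∀ i, 0 < σ i) :
    diagonalSqrt hσ * star (diagonalSqrt hσ).val = diagonal σ := by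
  simp [diagonalSqrt, star_eq_conjTranspose, fun i => Real.mul_self_sqrt (hσ i).le]

end DiagonalSqrt

/-- Let `X`, `Y` be symmetric positive definite real `n × n` matrices,
`Y = R Rᵀ` with `R` invertible, and `Rᵀ X R = U Σ² Uᵀ` with `U` orthogonal and
`Σ = diagonal σ` with strictly positive diagonal entries. Then
`T = Σ^(1/2) Uᵀ R⁻¹` is invertible with inverse `R U Σ^(-1/2)`, and
`(T⁻¹)ᵀ X T⁻¹ = Σ` and `T Y Tᵀ = Σ`. -/
theorem sector_balancing_transformation {n : ℕ}
    (X Y : Matrix (Fin n) (Fin n) ℝ) (hX : X.PosDef) (hY : Y.PosDef)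
    (R : Matrix (Fin n) (Fin n) ℝ) (hR : IsUnit R.det) (hYR : Y = R * Rᵀ)
    (U : Matrix (Fin n) (Fin n) ℝ) (hU₁ : U * Uᵀ = 1) (hU₂ : Uᵀ * U = 1)
    (σ : Fin n → ℝ) (hσ : ∀ i, 0 < σ i)
    (hSVD : Rᵀ * X * R = U * (Matrix.diagonal σ * Matrix.diagonal σ) * Uᵀ) :
    (Matrix.diagonal (fun i => Real.sqrt (σ i)) * Uᵀ * R⁻¹)
        * (R * U * Matrix.diagonal (fun i => (Real.sqrt (σ i))⁻¹)) = 1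
    ∧ (R * U * Matrix.diagonal (fun i => (Real.sqrt (σ i))⁻¹))
        * (Matrix.diagonal (fun i => Real.sqrt (σ i)) * Uᵀ * R⁻¹) = 1
    ∧ (R * U * Matrix.diagonal (fun i => (Real.sqrt (σ i))⁻¹))ᵀ * X
        * (R * U * Matrix.diagonal (fun i => (Real.sqrt (σ i))⁻¹)) = Matrix.diagonal σ
    ∧ (Matrix.diagonal (fun i => Real.sqrt (σ i)) * Uᵀ * R⁻¹) * Y
        * (Matrix.diagonal (fun i => Real.sqrt (σ i)) * Uᵀ * R⁻¹)ᵀ = Matrix.diagonal σ := by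
  lift R to (Matrix (Fin n) (Fin n) ℝ)ˣ using (isUnit_iff_isUnit_det R).2 hR
  rw [← star_diagonalSqrt_mul_self hσ, ← sq] at hSVD
  rw [← diagonalSqrt_mul_star_self hσ, ← val_diagonalSqrt hσ, ← val_inv_diagonalSqrt hσ]
  simpa only [coe_units_inv, star_eq_conjTranspose, conjTranspose_eq_transpose_of_trivial] using
    sector_balancing_transformation_general hYR ⟨hU₂, hU₁⟩ hSVD
end

section
/- Let a ≤ b be real numbers, set c = (a+b)/2, and let A, B, C, D be real matrices (A of size n×n, B of size n×m, C of size m×n, D of size m×m) with P = DᵀD − c(D + Dᵀ) + ab·I invertible. Suppose the symmetric positive definite matrices X and Y solve, respectively, the X-ARE AᵀX + XA − (XB − Cᵀ(cI − D))P⁻¹(XB − Cᵀ(cI − D))ᵀ + CᵀC = 0 and the Y-ARE AY + YAᵀ − (YCᵀ − B(cI − D)ᵀ)P⁻¹(YCᵀ − B(cI − D)ᵀ)ᵀ + BBᵀ = 0. Let R be invertible with Y = RRᵀ, let U be orthogonal and Σ diagonal with strictly positive diagonal entries such that RᵀXR = UΣ²Uᵀ, and set T = Σ^{1/2}UᵀR⁻¹.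 Then Σ solves both the X-ARE and the Y-ARE for the transformed realisation (TAT⁻¹, TB, CT⁻¹, D); in particular, the two Riccati solutions of the transformed realisation are equal and diagonal. -/
open Matrix

/-!
Under a change of state coordinates `T`, the left-hand side of the X-ARE is transformed by the
congruence with `T⁻¹` once `X` is replaced by `T⁻ᵀ X T⁻¹`, and that of the Y-ARE by the congruence
with `Tᵀ` once `Y` is replaced by `T Y Tᵀ`. So solutions are carried to solutions, and
`T = Σ^(1/2) Uᵀ R⁻¹`, with inverse `R U Σ^(-1/2)`, carries both `X` and `Y` to `Σ`. The Y-ARE is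
the X-ARE of the dual realisation `(Aᵀ, Cᵀ, Bᵀ)`, so only one of the two congruences needs a
computation.
-/

section Riccati

variable {α n n' p q : Type*} [CommRing α] [Fintype n] [Fintype n'] [Fintype p] [Fintype q]

/-- The left-hand side of the X-type algebraic Riccati equation. The matrix `E` stands for `cI - D`
and the weight `Q` for `P⁻¹`; both are arbitrary here. -/
def xRiccati (A : Matrix n n α) (B : Matrix n p α) (C : Matrix q n α) (E : Matrix q p α)
    (Q : Matrix p p α) (X : Matrix n n α) : Matrix n n α :=
  Aᵀ * X + X * A - (X * B - Cᵀ * E) * Q * (X * B - Cᵀ * E)ᵀ + Cᵀ * C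

/-- The left-hand side of the Y-type algebraic Riccati equation. The matrix `F` stands for
`(cI - D)ᵀ` and the weight `Q` for `P⁻¹`; both are arbitrary here. -/
def yRiccati (A : Matrix n n α) (B : Matrix n p α) (C : Matrix q n α) (F : Matrix p q α)
    (Q : Matrix q q α) (Y : Matrix n n α) : Matrix n n α :=
  A * Y + Y * Aᵀ - (Y * Cᵀ - B * F) * Q * (Y * Cᵀ - B * F)ᵀ + B * Bᵀ

theorem xRiccati_transpose (A : Matrix n n α) (B : Matrix n p α) (C : Matrix q n α)
    (F : Matrix p q α) (Q : Matrix q q α) (Y : Matrix n n α) :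
    xRiccati Aᵀ Cᵀ Bᵀ F Q Y = yRiccati A B C F Q Y := by
  simp only [xRiccati, yRiccati, transpose_transpose]

variable [DecidableEq n] {T : Matrix n' n α} {V : Matrix n n' α}

theorem xRiccati_conj (hVT : V * T = 1) (A : Matrix n n α) (B : Matrix n p α) (C : Matrix q n α)
    (E : Matrix q p α) (Q : Matrix p p α) (X : Matrix n n α) :
    xRiccati (T * A * V) (T * B) (C * V) E Q (Vᵀ * X * V) = Vᵀ * xRiccati A B C E Q X * V := by
  have hVT' : Tᵀ * Vᵀ = 1 := by rw [← transpose_mul, hVT, transpose_one]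
  have drift_left : (T * A * V)ᵀ * (Vᵀ * X * V) = Vᵀ * (Aᵀ * X) * V := by
    calc (T * A * V)ᵀ * (Vᵀ * X * V) = Vᵀ * Aᵀ * (Tᵀ * Vᵀ) * X * V := by
          simp only [transpose_mul, Matrix.mul_assoc]
      _ = Vᵀ * (Aᵀ * X) * V := by rw [hVT', Matrix.mul_one, Matrix.mul_assoc Vᵀ]
  have drift_right : Vᵀ * X * V * (T * A * V) = Vᵀ * (X * A) * V := by
    calc Vᵀ * X * V * (T * A * V) = Vᵀ * X * (V * T) * A * V := by simp only [Matrix.mul_assoc]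
      _ = Vᵀ * (X * A) * V := by rw [hVT, Matrix.mul_one, Matrix.mul_assoc Vᵀ]
  have gain : Vᵀ * X * V * (T * B) - (C * V)ᵀ * E = Vᵀ * (X * B - Cᵀ * E) := by
    calc Vᵀ * X * V * (T * B) - (C * V)ᵀ * E = Vᵀ * X * (V * T) * B - Vᵀ * Cᵀ * E := by
          simp only [transpose_mul, Matrix.mul_assoc]
      _ = Vᵀ * (X * B - Cᵀ * E) := by
          rw [hVT, Matrix.mul_one, Matrix.mul_sub, Matrix.mul_assoc, Matrix.mul_assoc]
  rw [xRiccati, drift_left, drift_right, gain]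
  simp only [xRiccati, transpose_mul, Matrix.mul_add, Matrix.mul_sub, Matrix.add_mul,
    Matrix.sub_mul, Matrix.mul_assoc, transpose_sub, transpose_transpose]

theorem yRiccati_conj (hVT : V * T = 1) (A : Matrix n n α) (B : Matrix n p α) (C : Matrix q n α)
    (F : Matrix p q α) (Q : Matrix q q α) (Y : Matrix n n α) :
    yRiccati (T * A * V) (T * B) (C * V) F Q (T * Y * Tᵀ) = T * yRiccati A B C F Q Y * Tᵀ := by
  have hVT' : Tᵀ * Vᵀ = 1 := by rw [← transpose_mul, hVT, transpose_one]
  simpa only [← xRiccati_transpose, transpose_mul, transpose_transpose, Matrix.mul_assoc]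
    using xRiccati_conj hVT' Aᵀ Cᵀ Bᵀ F Q Y

end Riccati

section Balancing

variable {α n p q : Type*} [CommRing α] [Fintype n] [DecidableEq n] [Fintype p] [Fintype q]
  {R S U X : Matrix n n α}

/-- The balancing change of coordinates `Σ^(1/2) Uᵀ R⁻¹`, where `S` is a square root of `Σ`. -/
noncomputable def balancingMatrix (S U R : Matrix n n α) : Matrix n n α :=
  S * Uᵀ * R⁻¹

theorem inv_balancingMatrix (hR : IsUnit R.det) (hU : Uᵀ * U = 1) :
    (balancingMatrix S U R)⁻¹ = R * U * S⁻¹ := by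
  rw [balancingMatrix, Matrix.mul_inv_rev, Matrix.mul_inv_rev, nonsing_inv_nonsing_inv R hR,
    inv_eq_right_inv hU, Matrix.mul_assoc]

theorem isUnit_det_balancingMatrix (hS : IsUnit S.det) (hU : Uᵀ * U = 1) (hR : IsUnit R.det) :
    IsUnit (balancingMatrix S U R).det := by
  rw [balancingMatrix, det_mul, det_mul]
  exact (hS.mul (isUnit_det_of_right_inverse hU)).mul (isUnit_nonsing_inv_det R hR)

theorem balancingMatrix_conj_mul_transpose (hS : S.IsSymm) (hU : Uᵀ * U = 1) (hR : IsUnit R.det) :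
    balancingMatrix S U R * (R * Rᵀ) * (balancingMatrix S U R)ᵀ = S * S := by
  have hTR : balancingMatrix S U R * R = S * Uᵀ := nonsing_inv_mul_cancel_right R (S * Uᵀ) hR
  calc balancingMatrix S U R * (R * Rᵀ) * (balancingMatrix S U R)ᵀ
      = (balancingMatrix S U R * R) * (balancingMatrix S U R * R)ᵀ := by
        simp only [transpose_mul, Matrix.mul_assoc]
    _ = S * (Uᵀ * U) * Sᵀ := by
        rw [hTR]
        simp only [transpose_mul, transpose_transpose, Matrix.mul_assoc]
    _ = S * S := by rw [hU, Matrix.mul_one, hS.eq]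

theorem inv_balancingMatrix_conj (hSsymm : S.IsSymm) (hS : IsUnit S.det) (hU : Uᵀ * U = 1)
    (hR : IsUnit R.det) (hX : Rᵀ * X * R = U * (S * S * (S * S)) * Uᵀ) :
    (balancingMatrix S U R)⁻¹ᵀ * X * (balancingMatrix S U R)⁻¹ = S * S := by
  calc (balancingMatrix S U R)⁻¹ᵀ * X * (balancingMatrix S U R)⁻¹
      = S⁻¹ * (Uᵀ * (Rᵀ * X * R) * U) * S⁻¹ := by
        rw [inv_balancingMatrix hR hU]
        simp only [transpose_mul, transpose_nonsing_inv, hSsymm.eq, Matrix.mul_assoc]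
    _ = S⁻¹ * ((Uᵀ * U) * (S * S * (S * S)) * (Uᵀ * U)) * S⁻¹ := by
        rw [hX]
        simp only [Matrix.mul_assoc]
    _ = (S⁻¹ * S) * (S * S) * (S * S⁻¹) := by
        rw [hU, Matrix.one_mul, Matrix.mul_one]
        simp only [Matrix.mul_assoc]
    _ = S * S := by
        rw [nonsing_inv_mul S hS, mul_nonsing_inv S hS, Matrix.one_mul, Matrix.mul_one]

theorem sector_balanced_realisation_general {A : Matrix n n α} {B : Matrix n p α}
    {C : Matrix q n α} {E : Matrix q p α} {F : Matrix p q α} {Q : Matrix p p α}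
    {Q' : Matrix q q α} {Y Λ T : Matrix n n α}
    (hXARE : xRiccati A B C E Q X = 0) (hYARE : yRiccati A B C F Q' Y = 0)
    (hR : IsUnit R.det) (hYR : Y = R * Rᵀ) (hU : Uᵀ * U = 1)
    (hSsymm : S.IsSymm) (hS : IsUnit S.det) (hSΛ : S * S = Λ)
    (hX : Rᵀ * X * R = U * (Λ * Λ) * Uᵀ) (hT : T = balancingMatrix S U R) :
    xRiccati (T * A * T⁻¹) (T * B) (C * T⁻¹) E Q Λ = 0 ∧
      yRiccati (T * A * T⁻¹) (T * B) (C * T⁻¹) F Q' Λ = 0 := by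
  subst hSΛ hYR hT
  have hT_inv := nonsing_inv_mul _ (isUnit_det_balancingMatrix hS hU hR)
  constructor
  · have h := xRiccati_conj hT_inv A B C E Q X
    rwa [inv_balancingMatrix_conj hSsymm hS hU hR hX, hXARE, Matrix.mul_zero,
      Matrix.zero_mul] at h
  · have h := yRiccati_conj hT_inv A B C F Q' (R * Rᵀ)
    rwa [balancingMatrix_conj_mul_transpose hSsymm hU hR, hYARE, Matrix.mul_zero,
      Matrix.zero_mul] at h

end Balancing

section DiagonalSqrt

variable {n : Type*} [Fintype n] [DecidableEq n] {σ : n → ℝ}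

theorem diagonal_sqrt_mul_self (hσ : ∀ i, 0 ≤ σ i) :
    diagonal (fun i => √(σ i)) * diagonal (fun i => √(σ i)) = diagonal σ := by
  simp only [diagonal_mul_diagonal, Real.mul_self_sqrt (hσ _)]

theorem isUnit_det_diagonal_sqrt (hσ : ∀ i, 0 < σ i) :
    IsUnit (diagonal fun i => √(σ i)).det := by
  rw [det_diagonal]
  exact (Finset.prod_pos fun i _ => Real.sqrt_pos.2 (hσ i)).ne'.isUnit

end DiagonalSqrt

/-- Suppose symmetric positive definite `X` and `Y` solve respectively the X-ARE and
the Y-ARE for the realisation `(A, B, C, D)` with sector bounds `a ≤ b`, `c = (a+b)/2` and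
`P = Dᵀ D − c (D + Dᵀ) + a b I` invertible. Let `Y = R Rᵀ` with `R` invertible,
`Rᵀ X R = U Σ² Uᵀ` with `U` orthogonal and `Σ = diagonal σ` positive, and
`T = Σ^(1/2) Uᵀ R⁻¹`. Then `Σ` solves both the X-ARE and the Y-ARE for the transformed
realisation `(T A T⁻¹, T B, C T⁻¹, D)`: the two Riccati solutions of the transformed
realisation coincide and are diagonal. -/
theorem sector_balanced_realisation {n m : ℕ} (a b : ℝ) (hab : a ≤ b)
    (A : Matrix (Fin n) (Fin n) ℝ) (B : Matrix (Fin n) (Fin m) ℝ)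
    (C : Matrix (Fin m) (Fin n) ℝ) (D : Matrix (Fin m) (Fin m) ℝ)
    (c : ℝ) (hc : c = (a + b) / 2)
    (P : Matrix (Fin m) (Fin m) ℝ)
    (hP : P = Dᵀ * D - c • (D + Dᵀ) + (a * b) • (1 : Matrix (Fin m) (Fin m) ℝ))
    (hPinv : IsUnit P.det)
    (X Y : Matrix (Fin n) (Fin n) ℝ) (hX : X.PosDef) (hY : Y.PosDef)
    (hXARE : Aᵀ * X + X * A
        - (X * B - Cᵀ * (c • (1 : Matrix (Fin m) (Fin m) ℝ) - D)) * P⁻¹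
          * (X * B - Cᵀ * (c • (1 : Matrix (Fin m) (Fin m) ℝ) - D))ᵀ
        + Cᵀ * C = 0)
    (hYARE : A * Y + Y * Aᵀ
        - (Y * Cᵀ - B * (c • (1 : Matrix (Fin m) (Fin m) ℝ) - D)ᵀ) * P⁻¹
          * (Y * Cᵀ - B * (c • (1 : Matrix (Fin m) (Fin m) ℝ) - D)ᵀ)ᵀ
        + B * Bᵀ = 0)
    (R : Matrix (Fin n) (Fin n) ℝ) (hR : IsUnit R.det) (hYR : Y = R * Rᵀ)
    (U : Matrix (Fin n) (Fin n) ℝ) (hU₁ : U * Uᵀ = 1) (hU₂ : Uᵀ * U = 1)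
    (σ : Fin n → ℝ) (hσ : ∀ i, 0 < σ i)
    (hSVD : Rᵀ * X * R = U * (Matrix.diagonal σ * Matrix.diagonal σ) * Uᵀ)
    (T : Matrix (Fin n) (Fin n) ℝ)
    (hT : T = Matrix.diagonal (fun i => Real.sqrt (σ i)) * Uᵀ * R⁻¹) :
    ((T * A * T⁻¹)ᵀ * Matrix.diagonal σ + Matrix.diagonal σ * (T * A * T⁻¹)
      - (Matrix.diagonal σ * (T * B) - (C * T⁻¹)ᵀ * (c • (1 : Matrix (Fin m) (Fin m) ℝ) - D))
          * P⁻¹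
          * (Matrix.diagonal σ * (T * B) - (C * T⁻¹)ᵀ * (c • (1 : Matrix (Fin m) (Fin m) ℝ) - D))ᵀ
      + (C * T⁻¹)ᵀ * (C * T⁻¹) = 0)
    ∧ ((T * A * T⁻¹) * Matrix.diagonal σ + Matrix.diagonal σ * (T * A * T⁻¹)ᵀ
      - (Matrix.diagonal σ * (C * T⁻¹)ᵀ - (T * B) * (c • (1 : Matrix (Fin m) (Fin m) ℝ) - D)ᵀ)
          * P⁻¹
          * (Matrix.diagonal σ * (C * T⁻¹)ᵀ - (T * B) * (c • (1 : Matrix (Fin m) (Fin m) ℝ) - D)ᵀ)ᵀ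
      + (T * B) * (T * B)ᵀ = 0) :=
  sector_balanced_realisation_general hXARE hYARE hR hYR hU₂ (isSymm_diagonal _)
    (isUnit_det_diagonal_sqrt hσ) (diagonal_sqrt_mul_self fun i => (hσ i).le) hSVD hT
end

section
/- Let H₁ and H₂ be complex l×l matrices and let a₁ ≤ b₁ and a₂ ≤ b₂ be real numbers. If H₁ is in sector [a₁,b₁] and H₂ is in sector [a₂,b₂], then H₁ + H₂ is in sector [a₁+a₂, b₁+b₂], i.e. Herm[(H₁+H₂ − (a₁+a₂)I)*(H₁+H₂ − (b₁+b₂)I)] is negative semidefinite. -/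
open Matrix
open scoped ComplexOrder

/-! Put `m = (a + b) / 2` and `r = (b - a) / 2`. Completing the square gives
`Herm[(x - a)* (x - b)] = (x - m)* (x - m) - r²`, so in a C⋆-algebra, for `a ≤ b`, `x` is in sector
`[a, b]` exactly when `‖x - m‖ ≤ r`, and additivity of sectors is the triangle inequality. -/

section Sector

open scoped ComplexStarModule

variable {A : Type*}

/-- The element `x` is in sector `[a, b]`: the Hermitian part of `(x - a)* (x - b)`, encoded as
`realPart`, is at most zero. Complex matrices with the Loewner order give the matrix notion. -/
def IsInSector [Ring A] [StarRing A] [Algebra ℂ A] [StarModule ℂ A] [LE A]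
    (a b : ℝ) (x : A) : Prop :=
  (ℜ (star (x - a • (1 : A)) * (x - b • (1 : A))) : A) ≤ 0

theorem realPart_star_add_smul_one_mul_sub_smul_one [Ring A] [StarRing A] [Algebra ℂ A]
    [StarModule ℂ A] (y : A) (r : ℝ) :
    (ℜ (star (y + r • (1 : A)) * (y - r • (1 : A))) : A) = star y * y - r ^ 2 • (1 : A) := by
  simp only [realPart_apply_coe, star_add, star_sub, star_mul, star_star, star_smul, star_one,
    star_trivial, add_mul, mul_sub, smul_mul_assoc, mul_smul_comm, mul_one, one_mul]
  module

section CStarAlgebra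

variable [CStarAlgebra A] [PartialOrder A] [StarOrderedRing A]

theorem star_mul_self_le_sq_smul_one_iff {y : A} {r : ℝ} (hr : 0 ≤ r) :
    star y * y ≤ r ^ 2 • (1 : A) ↔ ‖y‖ ≤ r := by
  rw [← Algebra.algebraMap_eq_smul_one, ← CStarAlgebra.norm_le_iff_le_algebraMap _ (sq_nonneg r)
    (star_mul_self_nonneg y), CStarRing.norm_star_mul_self, ← sq,
    sq_le_sq₀ (norm_nonneg y) hr]

theorem isInSector_iff_norm_sub_le {a b : ℝ} (hab : a ≤ b) {x : A} :
    IsInSector a b x ↔ ‖x - ((a + b) / 2) • (1 : A)‖ ≤ (b - a) / 2 := by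
  have left_factor : x - a • (1 : A) = x - ((a + b) / 2) • (1 : A) + ((b - a) / 2) • (1 : A) := by
    module
  have right_factor : x - b • (1 : A) = x - ((a + b) / 2) • (1 : A) - ((b - a) / 2) • (1 : A) := by
    module
  rw [IsInSector, left_factor, right_factor, realPart_star_add_smul_one_mul_sub_smul_one,
    sub_nonpos, star_mul_self_le_sq_smul_one_iff (by linarith)]

theorem sector_add_general {x₁ x₂ : A} {a₁ b₁ a₂ b₂ : ℝ} (hab₁ : a₁ ≤ b₁) (hab₂ : a₂ ≤ b₂)
    (hx₁ : IsInSector a₁ b₁ x₁) (hx₂ : IsInSector a₂ b₂ x₂) :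
    IsInSector (a₁ + a₂) (b₁ + b₂) (x₁ + x₂) := by
  rw [isInSector_iff_norm_sub_le hab₁] at hx₁
  rw [isInSector_iff_norm_sub_le hab₂] at hx₂
  rw [isInSector_iff_norm_sub_le (add_le_add hab₁ hab₂)]
  calc ‖x₁ + x₂ - ((a₁ + a₂ + (b₁ + b₂)) / 2) • (1 : A)‖
      = ‖(x₁ - ((a₁ + b₁) / 2) • (1 : A)) + (x₂ - ((a₂ + b₂) / 2) • (1 : A))‖ := by
        congr 1; module
    _ ≤ (b₁ - a₁) / 2 + (b₂ - a₂) / 2 := norm_add_le_of_le hx₁ hx₂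
    _ = (b₁ + b₂ - (a₁ + a₂)) / 2 := by ring

end CStarAlgebra

open scoped MatrixOrder in
theorem isInSector_iff_posSemidef_neg {n : Type*} [Fintype n] [DecidableEq n]
    {H : Matrix n n ℂ} {a b : ℝ} :
    IsInSector a b H ↔
      (-((1 / 2 : ℂ) • ((H - (a : ℂ) • (1 : Matrix n n ℂ))ᴴ * (H - (b : ℂ) • (1 : Matrix n n ℂ))
        + (H - (b : ℂ) • (1 : Matrix n n ℂ))ᴴ
          * (H - (a : ℂ) • (1 : Matrix n n ℂ))))).PosSemidef := by
  rw [IsInSector, Matrix.le_iff, zero_sub, realPart_apply_coe, star_mul, star_star,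
    ← Complex.coe_smul (2 : ℝ)⁻¹, ← Complex.coe_smul a, ← Complex.coe_smul b]
  simp only [Complex.ofReal_inv, Complex.ofReal_ofNat, one_div, star_eq_conjTranspose]

end Sector

/-- If `H₁` is in sector `[a₁, b₁]` and `H₂` is in sector `[a₂, b₂]`
(negative semidefiniteness of the corresponding Hermitian parts), then `H₁ + H₂` is in
sector `[a₁ + a₂, b₁ + b₂]`. -/
theorem sector_add {l : ℕ} (H₁ H₂ : Matrix (Fin l) (Fin l) ℂ) (a₁ b₁ a₂ b₂ : ℝ)
    (ha₁b₁ : a₁ ≤ b₁) (ha₂b₂ : a₂ ≤ b₂)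
    (hH₁ : (-((1 / 2 : ℂ) •
        ((H₁ - (a₁ : ℂ) • (1 : Matrix (Fin l) (Fin l) ℂ))ᴴ
            * (H₁ - (b₁ : ℂ) • (1 : Matrix (Fin l) (Fin l) ℂ))
          + (H₁ - (b₁ : ℂ) • (1 : Matrix (Fin l) (Fin l) ℂ))ᴴ
            * (H₁ - (a₁ : ℂ) • (1 : Matrix (Fin l) (Fin l) ℂ))))).PosSemidef)
    (hH₂ : (-((1 / 2 : ℂ) •
        ((H₂ - (a₂ : ℂ) • (1 : Matrix (Fin l) (Fin l) ℂ))ᴴ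
            * (H₂ - (b₂ : ℂ) • (1 : Matrix (Fin l) (Fin l) ℂ))
          + (H₂ - (b₂ : ℂ) • (1 : Matrix (Fin l) (Fin l) ℂ))ᴴ
            * (H₂ - (a₂ : ℂ) • (1 : Matrix (Fin l) (Fin l) ℂ))))).PosSemidef) :
    (-((1 / 2 : ℂ) •
        ((H₁ + H₂ - ((a₁ + a₂ : ℝ) : ℂ) • (1 : Matrix (Fin l) (Fin l) ℂ))ᴴ
            * (H₁ + H₂ - ((b₁ + b₂ : ℝ) : ℂ) • (1 : Matrix (Fin l) (Fin l) ℂ))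
          + (H₁ + H₂ - ((b₁ + b₂ : ℝ) : ℂ) • (1 : Matrix (Fin l) (Fin l) ℂ))ᴴ
            * (H₁ + H₂ - ((a₁ + a₂ : ℝ) : ℂ) • (1 : Matrix (Fin l) (Fin l) ℂ))))).PosSemidef := by
  open scoped MatrixOrder Matrix.Norms.L2Operator in
    rw [← isInSector_iff_posSemidef_neg] at hH₁ hH₂ ⊢
    exact sector_add_general ha₁b₁ ha₂b₂ hH₁ hH₂
end
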